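/- Let 1<p<∞ and 1/p<σ<1. There is a constant C depending only on σ and p such that for every metric space (X,d), every interval (a,b) ⊆ ℝ, every continuous map u : (a,b) → X and all a<x<y<b, one has osc_{[x,y]} u ≤ C (y-x)^{σ-1/p} ( ∫_x^y ∫_x^y d(u(z),u(t))^p / |z-t|^{1+σp} dz dt )^{1/p}. -/

import Mathlib

open MeasureTheory Set ENNReal

/-!
Campanato's telescoping argument. Fix `w ∈ [x, y]` and let the intervals `Aₙ ⊆ (x, y)` of length
`ℓₙ = 2⁻ⁿ (y - x)` shrink to `w`. By Jensen's inequality, and since `|z - t| ≤ ℓₙ` on `Aₙ × Aₙ₊₁`,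
the average of `d(u(z), u(t))` over `Aₙ × Aₙ₊₁` is at most
`(ℓₙ⁻¹ ℓₙ₊₁⁻¹ ℓₙ^(1 + σp) E)^(1/p) = 2^(1/p) ℓₙ^(σ - 1/p) E^(1/p)`, `E` being the double integral.
As `σ > 1/p`, these bounds form a convergent geometric series; by continuity at `w`, its sum bounds
the average over `(x, y)` of `d(u(w), u(·))`. Comparing two points through this average gives the
oscillation bound.
-/

open Filter ProbabilityTheory Topology

section Averages

variable {α β X : Type*} [MeasurableSpace α] [MeasurableSpace β] [PseudoEMetricSpace X]

lemma lintegral_rpow_le_lintegral_rpow {μ : Measure α} (hμ : μ univ ≤ 1) {p : ℝ} (hp : 1 ≤ p)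
    {f : α → ℝ≥0∞} (hf : AEMeasurable f μ) :
    (∫⁻ a, f a ∂μ) ^ p ≤ ∫⁻ a, f a ^ p ∂μ := by
  have hp0 : 0 < p := one_pos.trans_le hp
  have h_mean : eLpNorm' f 1 μ ≤ eLpNorm' f p μ * μ univ ^ (1 / 1 - 1 / p) :=
    eLpNorm'_le_eLpNorm'_mul_rpow_measure_univ one_pos hp hf.aestronglyMeasurable
  have h_mass : μ univ ^ (1 / 1 - 1 / p) ≤ 1 :=
    ENNReal.rpow_le_one hμ (by rw [sub_nonneg]; exact one_div_le_one_div_of_le one_pos hp)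
  rw [← ENNReal.le_rpow_inv_iff hp0]
  simpa [eLpNorm'] using h_mean.trans (mul_le_of_le_one_right' h_mass)

lemma edist_le_lintegral_edist_add_lintegral_edist {ν : Measure β} [IsProbabilityMeasure ν]
    {g : β → X} (hg : AEStronglyMeasurable g ν) (c c' : X) :
    edist c c' ≤ ∫⁻ t, edist c (g t) ∂ν + ∫⁻ t, edist c' (g t) ∂ν := by
  have h_meas : AEMeasurable (fun t => edist c (g t)) ν :=
    ((continuous_const.edist continuous_id).comp_aestronglyMeasurable hg).aemeasurable
  calc edist c c' = ∫⁻ _, edist c c' ∂ν := by simp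
    _ ≤ ∫⁻ t, (edist c (g t) + edist c' (g t)) ∂ν :=
      lintegral_mono fun t => edist_triangle_right c c' (g t)
    _ = ∫⁻ t, edist c (g t) ∂ν + ∫⁻ t, edist c' (g t) ∂ν := lintegral_add_left' h_meas _

lemma lintegral_edist_le_lintegral_edist_add {μ : Measure α} [IsZeroOrProbabilityMeasure μ]
    {ν : Measure β} [IsProbabilityMeasure ν] (f : α → X) {g : β → X}
    (hg : AEStronglyMeasurable g ν) (c : X) :
    ∫⁻ z, edist c (f z) ∂μ ≤
      ∫⁻ t, edist c (g t) ∂ν + ∫⁻ z, ∫⁻ t, edist (f z) (g t) ∂ν ∂μ := by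
  calc ∫⁻ z, edist c (f z) ∂μ
      ≤ ∫⁻ z, (∫⁻ t, edist c (g t) ∂ν + ∫⁻ t, edist (f z) (g t) ∂ν) ∂μ :=
        lintegral_mono fun z => edist_le_lintegral_edist_add_lintegral_edist hg c (f z)
    _ = (∫⁻ t, edist c (g t) ∂ν) * μ univ + ∫⁻ z, ∫⁻ t, edist (f z) (g t) ∂ν ∂μ := by
        rw [lintegral_add_left measurable_const, lintegral_const]
    _ ≤ _ := by
        gcongr
        exact mul_le_of_le_one_right' prob_le_one

lemma lintegral_edist_le_tsum_lintegral_edist {μ : ℕ → Measure α} [∀ n, IsProbabilityMeasure (μ n)]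
    {u : α → X} (hu : ∀ n, AEStronglyMeasurable u (μ n)) {c : X}
    (hc : Tendsto (fun n => ∫⁻ z, edist c (u z) ∂μ n) atTop (𝓝 0)) :
    ∫⁻ z, edist c (u z) ∂μ 0 ≤ ∑' n, ∫⁻ z, ∫⁻ t, edist (u z) (u t) ∂μ (n + 1) ∂μ n := by
  set D : ℕ → ℝ≥0∞ := fun n => ∫⁻ z, ∫⁻ t, edist (u z) (u t) ∂μ (n + 1) ∂μ n
  have h_partial (n : ℕ) :
      ∫⁻ z, edist c (u z) ∂μ 0 ≤ ∫⁻ z, edist c (u z) ∂μ n + ∑ i ∈ Finset.range n, D i := by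
    induction n with
    | zero => simp
    | succ n ih =>
      calc ∫⁻ z, edist c (u z) ∂μ 0
          ≤ ∫⁻ z, edist c (u z) ∂μ n + ∑ i ∈ Finset.range n, D i := ih
        _ ≤ ∫⁻ z, edist c (u z) ∂μ (n + 1) + D n + ∑ i ∈ Finset.range n, D i := by
            gcongr
            exact lintegral_edist_le_lintegral_edist_add u (hu (n + 1)) c
        _ = ∫⁻ z, edist c (u z) ∂μ (n + 1) + ∑ i ∈ Finset.range (n + 1), D i := by
            rw [Finset.sum_range_succ_comm, add_assoc]
  have h_lim : Tendsto (fun n => ∫⁻ z, edist c (u z) ∂μ n + ∑' i, D i) atTop (𝓝 (∑' i, D i)) := by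
    simpa only [zero_add] using hc.add_const (∑' i, D i)
  exact ge_of_tendsto' h_lim fun n => (h_partial n).trans <| by
    gcongr
    exact ENNReal.sum_le_tsum _

lemma tendsto_lintegral_cond_edist [TopologicalSpace α] {ι : Type*} {l : Filter ι}
    {A : ι → Set α} (hA : ∀ i, MeasurableSet (A i)) {s : Set α} {w : α}
    (hAw : Tendsto A l (𝓝[s] w).smallSets) {u : α → X} (hu : ContinuousWithinAt u s w)
    (μ : Measure α) :
    Tendsto (fun i => ∫⁻ z, edist (u w) (u z) ∂μ[|A i]) l (𝓝 0) := by
  refine ENNReal.tendsto_nhds_zero.2 fun ε hε => ?_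
  have h_near : ∀ᶠ z in 𝓝[s] w, edist (u w) (u z) ≤ ε := by
    filter_upwards [hu (Metric.closedEBall_mem_nhds (u w) hε)] with z hz
    rwa [edist_comm]
  filter_upwards [hAw.eventually (eventually_smallSets_forall.2 h_near)] with i hi
  calc ∫⁻ z, edist (u w) (u z) ∂μ[|A i]
      ≤ ∫⁻ _, ε ∂μ[|A i] := lintegral_mono_ae (ae_cond_of_forall_mem (hA i) hi)
    _ ≤ ε := by
        rw [lintegral_const]
        exact mul_le_of_le_one_right' prob_le_one

end Averages

section Energy

variable {α X : Type*} [PseudoEMetricSpace X]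

lemma edist_rpow_le_rpow_mul_div [EMetricSpace α] {p q : ℝ} (hp : 0 < p) (hq : 0 ≤ q)
    {δ : ℝ≥0∞} (hδ : δ ≠ ∞) (u : α → X) {z t : α} (hzt : edist z t ≤ δ) :
    edist (u z) (u t) ^ p ≤ δ ^ q * (edist (u z) (u t) ^ p / edist z t ^ q) := by
  rcases eq_or_ne z t with rfl | hne
  · simp [hp]
  have h_top : edist z t ≠ ∞ := ne_top_of_le_ne_top hδ hzt
  calc edist (u z) (u t) ^ p
      = edist z t ^ q * (edist (u z) (u t) ^ p / edist z t ^ q) :=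
        (ENNReal.mul_div_cancel (by simp [ENNReal.rpow_eq_zero_iff, hne, h_top])
          (ENNReal.rpow_ne_top_of_nonneg hq h_top)).symm
    _ ≤ _ := by gcongr

variable [MeasurableSpace α]

/-- The Gagliardo energy `∬_{s × s} d(u(z), u(t))^p / d(z, t)^q dμ dμ`. On an interval of the line,
`q = 1 + σp` makes it the `p`-th power of the Gagliardo seminorm of the fractional Sobolev space
`W^{σ,p}`; the exponent `q` is kept free because the dimension of `α` is. -/
noncomputable def gagliardoEnergy [EDist α] (μ : Measure α) (p q : ℝ) (u : α → X) (s : Set α) :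
    ℝ≥0∞ :=
  ∫⁻ z in s, ∫⁻ t in s, edist (u z) (u t) ^ p / edist z t ^ q ∂μ ∂μ

lemma lintegral_lintegral_cond (μ : Measure α) (A B : Set α) (f : α → α → ℝ≥0∞) :
    ∫⁻ z, ∫⁻ t, f z t ∂μ[|B] ∂μ[|A] =
      (μ A)⁻¹ * (μ B)⁻¹ * ∫⁻ z in A, ∫⁻ t in B, f z t ∂μ ∂μ := by
  rcases eq_or_ne (μ B) 0 with hB | hB
  · simp [ProbabilityTheory.cond, Measure.restrict_eq_zero.2 hB]
  · simp only [ProbabilityTheory.cond, lintegral_smul_measure, smul_eq_mul]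
    rw [lintegral_const_mul' _ _ (ENNReal.inv_ne_top.2 hB), mul_assoc]

variable [EMetricSpace α] {p q : ℝ} {δ : ℝ≥0∞}

lemma setLIntegral_edist_rpow_le_mul_gagliardoEnergy (hp : 0 < p) (hq : 0 ≤ q) (hδ : δ ≠ ∞)
    (μ : Measure α) (u : α → X) {s A B : Set α} (hA : MeasurableSet A) (hB : MeasurableSet B)
    (hAs : A ⊆ s) (hBs : B ⊆ s) (hAB : ∀ z ∈ A, ∀ t ∈ B, edist z t ≤ δ) :
    ∫⁻ z in A, ∫⁻ t in B, edist (u z) (u t) ^ p ∂μ ∂μ ≤ δ ^ q * gagliardoEnergy μ p q u s := by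
  have h_top : δ ^ q ≠ ∞ := ENNReal.rpow_ne_top_of_nonneg hq hδ
  calc ∫⁻ z in A, ∫⁻ t in B, edist (u z) (u t) ^ p ∂μ ∂μ
      ≤ ∫⁻ z in A, ∫⁻ t in B, δ ^ q * (edist (u z) (u t) ^ p / edist z t ^ q) ∂μ ∂μ :=
        setLIntegral_mono' hA fun z hz => setLIntegral_mono' hB fun t ht =>
          edist_rpow_le_rpow_mul_div hp hq hδ u (hAB z hz t ht)
    _ = δ ^ q * ∫⁻ z in A, ∫⁻ t in B, edist (u z) (u t) ^ p / edist z t ^ q ∂μ ∂μ := by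
        simp_rw [lintegral_const_mul' _ _ h_top]
    _ ≤ δ ^ q * gagliardoEnergy μ p q u s := by
        gcongr
        exact (lintegral_mono_set hAs).trans (lintegral_mono fun z => lintegral_mono_set hBs)

lemma lintegral_cond_edist_le_rpow_gagliardoEnergy (hp : 1 ≤ p) (hq : 0 ≤ q) (hδ : δ ≠ ∞)
    {μ : Measure α} {u : α → X} {s A B : Set α} (hu : AEStronglyMeasurable u (μ.restrict s))
    (hA : MeasurableSet A) (hB : MeasurableSet B) (hAs : A ⊆ s) (hBs : B ⊆ s)
    (hAB : ∀ z ∈ A, ∀ t ∈ B, edist z t ≤ δ) :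
    ∫⁻ z, ∫⁻ t, edist (u z) (u t) ∂μ[|B] ∂μ[|A] ≤
      ((μ A)⁻¹ * (μ B)⁻¹ * (δ ^ q * gagliardoEnergy μ p q u s)) ^ (1 / p) := by
  have hp0 : 0 < p := one_pos.trans_le hp
  have h_meas : AEMeasurable (fun a : α × α => edist (u a.1) (u a.2)) (μ[|A].prod μ[|B]) :=
    (continuous_edist.comp_aestronglyMeasurable
      (((hu.mono_set hAs).smul_measure _).comp_fst.prodMk
        ((hu.mono_set hBs).smul_measure _).comp_snd)).aemeasurable
  have h_mass : μ[|A].prod μ[|B] univ ≤ 1 := by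
    rw [← univ_prod_univ, Measure.prod_prod]
    exact mul_le_one' prob_le_one prob_le_one
  rw [one_div, ENNReal.le_rpow_inv_iff hp0]
  calc (∫⁻ z, ∫⁻ t, edist (u z) (u t) ∂μ[|B] ∂μ[|A]) ^ p
      = (∫⁻ a, edist (u a.1) (u a.2) ∂μ[|A].prod μ[|B]) ^ p := by rw [lintegral_prod _ h_meas]
    _ ≤ ∫⁻ a, edist (u a.1) (u a.2) ^ p ∂μ[|A].prod μ[|B] :=
        lintegral_rpow_le_lintegral_rpow h_mass hp h_meas
    _ = (μ A)⁻¹ * (μ B)⁻¹ * ∫⁻ z in A, ∫⁻ t in B, edist (u z) (u t) ^ p ∂μ ∂μ := by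
        rw [lintegral_prod _ (h_meas.pow_const p), lintegral_lintegral_cond]
    _ ≤ _ := by
        gcongr
        exact setLIntegral_edist_rpow_le_mul_gagliardoEnergy hp0 hq hδ μ u hA hB hAs hBs hAB

end Energy

section DyadicInterval

variable {x y w : ℝ}

/-- The image of the interval `(x, y)` under the homothety of ratio `2⁻ⁿ` centred at `w`. For
`w ∈ [x, y]` these intervals are nested and shrink to `w`, staying inside `(x, y)` even when `w` is
an endpoint. -/
def dyadicInterval (x y w : ℝ) (n : ℕ) : Set ℝ := Ioo (w - (w - x) / 2 ^ n) (w + (y - w) / 2 ^ n)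

@[simp]
lemma dyadicInterval_zero (x y w : ℝ) : dyadicInterval x y w 0 = Ioo x y := by
  simp [dyadicInterval]

lemma measurableSet_dyadicInterval (x y w : ℝ) (n : ℕ) : MeasurableSet (dyadicInterval x y w n) :=
  measurableSet_Ioo

lemma volume_dyadicInterval (x y w : ℝ) (n : ℕ) :
    volume (dyadicInterval x y w n) = ENNReal.ofReal ((y - x) / 2 ^ n) := by
  rw [dyadicInterval, Real.volume_Ioo]
  congr 1
  ring

lemma antitone_dyadicInterval (hw : w ∈ Icc x y) : Antitone (dyadicInterval x y w) := by
  intro m n hmn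
  have hwx : 0 ≤ w - x := sub_nonneg.2 hw.1
  have hyw : 0 ≤ y - w := sub_nonneg.2 hw.2
  have h_pow : (2 : ℝ) ^ m ≤ 2 ^ n := pow_le_pow_right₀ one_le_two hmn
  apply Ioo_subset_Ioo <;> gcongr

lemma dyadicInterval_subset_Ioo (hw : w ∈ Icc x y) (n : ℕ) : dyadicInterval x y w n ⊆ Ioo x y :=
  dyadicInterval_zero x y w ▸ antitone_dyadicInterval hw n.zero_le

lemma edist_le_of_mem_dyadicInterval {n : ℕ} {z t : ℝ} (hz : z ∈ dyadicInterval x y w n)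
    (ht : t ∈ dyadicInterval x y w n) : edist z t ≤ ENNReal.ofReal ((y - x) / 2 ^ n) := by
  rw [← volume_dyadicInterval x y w n, dyadicInterval, Real.volume_Ioo, ← Real.ediam_Ioo]
  exact Metric.edist_le_ediam_of_mem hz ht

lemma isProbabilityMeasure_cond_dyadicInterval (hxy : x < y) (w : ℝ) (n : ℕ) :
    IsProbabilityMeasure volume[|dyadicInterval x y w n] := by
  apply cond_isProbabilityMeasure_of_finite <;> rw [volume_dyadicInterval]
  · have : 0 < (y - x) / 2 ^ n := div_pos (sub_pos.2 hxy) (by positivity)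
    simpa
  · exact ENNReal.ofReal_ne_top

lemma tendsto_dyadicInterval (hw : w ∈ Icc x y) :
    Tendsto (dyadicInterval x y w) atTop (𝓝[Icc x y] w).smallSets := by
  have h_pow (c : ℝ) : Tendsto (fun n : ℕ => c / 2 ^ n) atTop (𝓝 0) :=
    tendsto_const_nhds.div_atTop (tendsto_pow_atTop_atTop_of_one_lt one_lt_two)
  have h_left : Tendsto (fun n : ℕ => w - (w - x) / 2 ^ n) atTop (𝓝 w) := by
    simpa only [sub_zero] using (h_pow (w - x)).const_sub w
  have h_right : Tendsto (fun n : ℕ => w + (y - w) / 2 ^ n) atTop (𝓝 w) := by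
    simpa only [add_zero] using (h_pow (y - w)).const_add w
  rw [nhdsWithin, smallSets_inf, smallSets_principal]
  refine tendsto_inf.2 ⟨h_left.Ioo h_right, tendsto_principal.2 <| Eventually.of_forall fun n => ?_⟩
  exact (dyadicInterval_subset_Ioo hw n).trans Ioo_subset_Icc_self

end DyadicInterval

section Morrey

variable {X : Type*} [PseudoEMetricSpace X] {σ p x y w : ℝ} {u : ℝ → X}

lemma rpow_morrey_scaling (hp : 0 < p) {ℓ : ℝ} (hℓ : 0 < ℓ) (σ : ℝ) :
    (ℓ⁻¹ * (ℓ / 2)⁻¹ * ℓ ^ (1 + σ * p)) ^ (1 / p) = 2 ^ (1 / p) * ℓ ^ (σ - 1 / p) := by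
  have h_base : ℓ⁻¹ * (ℓ / 2)⁻¹ * ℓ ^ (1 + σ * p) = 2 * ℓ ^ (σ * p - 1) := by
    rw [show 1 + σ * p = σ * p - 1 + 1 + 1 by ring, Real.rpow_add_one hℓ.ne',
      Real.rpow_add_one hℓ.ne']
    field_simp
  have h_exp : (σ * p - 1) * (1 / p) = σ - 1 / p := by field_simp
  rw [h_base, Real.mul_rpow (by positivity) (by positivity), ← Real.rpow_mul hℓ.le, h_exp]

lemma lintegral_cond_dyadicInterval_edist_le (hp : 1 ≤ p) (hσ : 0 ≤ σ) (hxy : x < y)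
    (hu : AEStronglyMeasurable u (volume.restrict (Ioo x y))) (hw : w ∈ Icc x y) (n : ℕ) :
    ∫⁻ z, ∫⁻ t, edist (u z) (u t) ∂volume[|dyadicInterval x y w (n + 1)]
        ∂volume[|dyadicInterval x y w n] ≤
      ENNReal.ofReal (2 ^ (1 / p) * ((y - x) / 2 ^ n) ^ (σ - 1 / p)) *
        gagliardoEnergy volume p (1 + σ * p) u (Ioo x y) ^ (1 / p) := by
  have hp0 : 0 < p := one_pos.trans_le hp
  have hℓ : 0 < (y - x) / 2 ^ n := div_pos (sub_pos.2 hxy) (by positivity)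
  have h_half : (y - x) / 2 ^ (n + 1) = (y - x) / 2 ^ n / 2 := by rw [pow_succ, div_div]
  have h_close : ∀ z ∈ dyadicInterval x y w n, ∀ t ∈ dyadicInterval x y w (n + 1),
      edist z t ≤ ENNReal.ofReal ((y - x) / 2 ^ n) := fun z hz t ht =>
    edist_le_of_mem_dyadicInterval hz (antitone_dyadicInterval hw n.le_succ ht)
  have h_mean := lintegral_cond_edist_le_rpow_gagliardoEnergy hp
    (show 0 ≤ 1 + σ * p by positivity) ENNReal.ofReal_ne_top hu
    (measurableSet_dyadicInterval x y w n) (measurableSet_dyadicInterval x y w (n + 1))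
    (dyadicInterval_subset_Ioo hw n) (dyadicInterval_subset_Ioo hw (n + 1)) h_close
  rw [volume_dyadicInterval, volume_dyadicInterval, h_half] at h_mean
  generalize (y - x) / 2 ^ n = ℓ at hℓ h_mean ⊢
  rwa [← ENNReal.ofReal_inv_of_pos hℓ, ← ENNReal.ofReal_inv_of_pos (half_pos hℓ),
    ENNReal.ofReal_rpow_of_pos hℓ, ← mul_assoc, ← ENNReal.ofReal_mul (by positivity),
    ← ENNReal.ofReal_mul (by positivity), ENNReal.mul_rpow_of_nonneg _ _ (by positivity),
    ENNReal.ofReal_rpow_of_nonneg (by positivity) (by positivity),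
    rpow_morrey_scaling hp0 hℓ] at h_mean

lemma hasSum_div_two_pow_rpow {β L : ℝ} (hβ : 0 < β) (hL : 0 ≤ L) :
    HasSum (fun n : ℕ => (L / 2 ^ n) ^ β) (L ^ β * (1 - (1 / 2) ^ β)⁻¹) := by
  have h_term (n : ℕ) : (L / 2 ^ n) ^ β = L ^ β * ((1 / 2 : ℝ) ^ β) ^ n := by
    rw [← Real.rpow_mul_natCast (by norm_num), mul_comm β, Real.rpow_natCast_mul (by norm_num),
      ← Real.mul_rpow hL (by positivity), one_div_pow, mul_one_div]
  simp only [h_term]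
  exact (hasSum_geometric_of_lt_one (by positivity)
    (Real.rpow_lt_one (by norm_num) (by norm_num) hβ)).mul_left _

lemma lintegral_cond_Ioo_edist_le (hp : 1 ≤ p) (hσ : 1 / p < σ) (hxy : x < y)
    (hu : ContinuousOn u (Icc x y)) (hw : w ∈ Icc x y) :
    ∫⁻ z, edist (u w) (u z) ∂volume[|Ioo x y] ≤
      ENNReal.ofReal (2 ^ (1 / p) * ((y - x) ^ (σ - 1 / p) * (1 - (1 / 2) ^ (σ - 1 / p))⁻¹)) *
        gagliardoEnergy volume p (1 + σ * p) u (Ioo x y) ^ (1 / p) := by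
  have hp0 : 0 < p := one_pos.trans_le hp
  have hσ0 : 0 ≤ σ := (one_div_pos.2 hp0).le.trans hσ.le
  have hL : 0 < y - x := sub_pos.2 hxy
  have h_meas : AEStronglyMeasurable u (volume.restrict (Ioo x y)) :=
    (hu.mono Ioo_subset_Icc_self).aestronglyMeasurable measurableSet_Ioo
  have h_sum := (hasSum_div_two_pow_rpow (sub_pos.2 hσ) hL.le).mul_left (2 ^ (1 / p))
  have (n : ℕ) := isProbabilityMeasure_cond_dyadicInterval hxy w n
  calc ∫⁻ z, edist (u w) (u z) ∂volume[|Ioo x y]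
      = ∫⁻ z, edist (u w) (u z) ∂volume[|dyadicInterval x y w 0] := by rw [dyadicInterval_zero]
    _ ≤ ∑' n, ∫⁻ z, ∫⁻ t, edist (u z) (u t) ∂volume[|dyadicInterval x y w (n + 1)]
          ∂volume[|dyadicInterval x y w n] :=
        lintegral_edist_le_tsum_lintegral_edist (μ := fun n => volume[|dyadicInterval x y w n])
          (fun n => (h_meas.mono_set (dyadicInterval_subset_Ioo hw n)).smul_measure _)
          (tendsto_lintegral_cond_edist (measurableSet_dyadicInterval x y w)
            (tendsto_dyadicInterval hw) (hu w hw) volume)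
    _ ≤ ∑' n : ℕ, ENNReal.ofReal (2 ^ (1 / p) * ((y - x) / 2 ^ n) ^ (σ - 1 / p)) *
          gagliardoEnergy volume p (1 + σ * p) u (Ioo x y) ^ (1 / p) :=
        ENNReal.tsum_le_tsum (lintegral_cond_dyadicInterval_edist_le hp hσ0 hxy h_meas hw)
    _ = _ := by
        rw [ENNReal.tsum_mul_right, ← h_sum.tsum_eq,
          ENNReal.ofReal_tsum_of_nonneg (fun n => by positivity) h_sum.summable]

lemma edist_le_morrey (hp : 1 ≤ p) (hσ : 1 / p < σ) (hxy : x < y) (hu : ContinuousOn u (Icc x y))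
    {z t : ℝ} (hz : z ∈ Icc x y) (ht : t ∈ Icc x y) :
    edist (u z) (u t) ≤
      ENNReal.ofReal (2 * 2 ^ (1 / p) * (1 - (1 / 2) ^ (σ - 1 / p))⁻¹ * (y - x) ^ (σ - 1 / p)) *
        gagliardoEnergy volume p (1 + σ * p) u (Ioo x y) ^ (1 / p) := by
  have h_prob : IsProbabilityMeasure volume[|Ioo x y] := by
    simpa using isProbabilityMeasure_cond_dyadicInterval hxy z 0
  have h_meas : AEStronglyMeasurable u volume[|Ioo x y] :=
    ((hu.mono Ioo_subset_Icc_self).aestronglyMeasurable measurableSet_Ioo).smul_measure _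
  calc edist (u z) (u t)
      ≤ ∫⁻ s, edist (u z) (u s) ∂volume[|Ioo x y] + ∫⁻ s, edist (u t) (u s) ∂volume[|Ioo x y] :=
        edist_le_lintegral_edist_add_lintegral_edist h_meas (u z) (u t)
    _ ≤ _ := add_le_add (lintegral_cond_Ioo_edist_le hp hσ hxy hu hz)
        (lintegral_cond_Ioo_edist_le hp hσ hxy hu ht)
    _ = _ := by
        rw [← two_mul, ← mul_assoc, ← ENNReal.ofReal_ofNat, ← ENNReal.ofReal_mul zero_le_two]
        congr 2
        ring

end Morrey

theorem oscillation_morrey_estimate_general {σ p : ℝ} (hp : 1 ≤ p) (hσ : 1 / p < σ) :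
    ∃ C : ℝ, 0 < C ∧ ∀ (X : Type*) [PseudoEMetricSpace X] (u : ℝ → X) (x y : ℝ), x < y →
      ContinuousOn u (Icc x y) →
        (⨆ z ∈ Icc x y, ⨆ t ∈ Icc x y, edist (u z) (u t)) ≤
          ENNReal.ofReal (C * (y - x) ^ (σ - 1 / p)) *
            gagliardoEnergy volume p (1 + σ * p) u (Ioo x y) ^ (1 / p) := by
  have h_ratio : (1 / 2 : ℝ) ^ (σ - 1 / p) < 1 :=
    Real.rpow_lt_one (by norm_num) (by norm_num) (sub_pos.2 hσ)
  have h_inv : 0 < (1 - (1 / 2 : ℝ) ^ (σ - 1 / p))⁻¹ := inv_pos.2 (sub_pos.2 h_ratio)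
  refine ⟨2 * 2 ^ (1 / p) * (1 - (1 / 2) ^ (σ - 1 / p))⁻¹, mul_pos (by positivity) h_inv, ?_⟩
  intro X _ u x y hxy hu
  exact iSup₂_le fun z hz => iSup₂_le fun t ht => edist_le_morrey hp hσ hxy hu hz ht

/-- **Morrey-type oscillation estimate for metric-space valued maps.**
For `1 < p < ∞` and `1/p < σ < 1`, there is a constant `C = C(σ,p)` such that for every
metric space `X`, every interval `(a,b) ⊆ ℝ`, every continuous `u : (a,b) → X` and all
`a < x < y < b`,
`osc_{[x,y]} u ≤ C (y-x)^{σ-1/p} (∫_x^y ∫_x^y d(u(z),u(t))^p/|z-t|^{1+σp} dz dt)^{1/p}`. -/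
theorem oscillation_morrey_estimate (σ p : ℝ) (hp1 : 1 < p) (hσ1 : 1 / p < σ)
    (hσ2 : σ < 1) :
    ∃ C : ℝ, 0 < C ∧ ∀ (X : Type*) [MetricSpace X] (a b : ℝ) (u : ℝ → X),
      ContinuousOn u (Ioo a b) → ∀ x y : ℝ, a < x → x < y → y < b →
        (⨆ z ∈ Icc x y, ⨆ t ∈ Icc x y, edist (u z) (u t)) ≤
          ENNReal.ofReal (C * (y - x) ^ (σ - 1 / p)) *
            (∫⁻ z in Ioo x y, ∫⁻ t in Ioo x y,
                edist (u z) (u t) ^ p / edist z t ^ (1 + σ * p)) ^ (1 / p) := by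
  obtain ⟨C, hC, h_osc⟩ := oscillation_morrey_estimate_general hp1.le hσ1
  exact ⟨C, hC, fun X _ a b u hu x y hax hxy hyb =>
    h_osc X u x y hxy (hu.mono (Icc_subset_Ioo hax hyb))⟩
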